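/- There exists C > 0 such that for each sign σ ∈ {+1,−1} and all nonnegative square-summable sequences f, g, h : ℤ → [0,∞): Σ_{n₁, n₂ ∈ ℤ} ( ⟨n₁−n₂⟩^{−1} |n₁−n₂| ( ⟨n₁⟩ + ⟨n₂⟩ ) / ( ⟨Φ_σ⟩^{1/2} ⟨n₁⟩^{1/2} ⟨n₂⟩^{1/2} ) ) f_{n₁−n₂} g_{n₁} h_{n₂} ≤ C ‖f‖_{ℓ²} ‖g‖_{ℓ²} ‖h‖_{ℓ²}. -/

import Mathlib

/-!
The phase factors as `Φ_σ = (n₁ - n₂) (n₁ + n₂) + σ⟨n₁ - n₂⟩`. So, for `n₁ ≠ n₂`, either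
`⟨n₁ - n₂⟩⟨n₁ + n₂⟩ ≲ ⟨Φ_σ⟩`, or `⟨n₁ + n₂⟩ ≲ 1 + |σ|` and then `⟨n₁⟩`, `⟨n₂⟩` are comparable.
In both cases the weight is at most a constant times `⟨n₁⟩⁻¹ + ⟨n₂⟩⁻¹ + ⟨n₁ - n₂⟩⁻¹ + ⟨n₁ + n₂⟩⁻¹`,
and `n ↦ ⟨n⟩⁻¹` is square-summable. Each of the four sums then pairs four `ℓ²` sequences in such a
way that two of the indices already determine `(n₁, n₂)`, and so do the two others; Cauchy–Schwarz
bounds it by the product of the four norms.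
-/

open scoped ENNReal NNReal

/-- `⟨x⟩ = (1+x²)^{1/2}`. -/
noncomputable def jbR (x : ℝ) : ℝ := Real.sqrt (1 + x ^ 2)

/-- The Zakharov phase `Φ_σ = n₁² - n₂² + σ⟨n₀⟩` with `n₀ = n₁ - n₂`. -/
noncomputable def PhiZak (σ : ℝ) (n₁ n₂ : ℤ) : ℝ :=
  ((n₁ ^ 2 - n₂ ^ 2 : ℤ) : ℝ) + σ * jbR ((n₁ - n₂ : ℤ) : ℝ)

/-- The `ℓ²(ℤ)` norm (valued in `[0,∞]`). -/
noncomputable def l2Z (ω : ℤ → ℝ≥0) : ℝ≥0∞ :=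
  (∑' n : ℤ, ((ω n : ℝ≥0∞)) ^ 2) ^ (1/2 : ℝ)

section JapaneseBracket

lemma jbR_pos (x : ℝ) : 0 < jbR x := Real.sqrt_pos.2 (by positivity)

lemma sq_jbR (x : ℝ) : jbR x ^ 2 = 1 + x ^ 2 := Real.sq_sqrt (by positivity)

lemma one_le_jbR (x : ℝ) : 1 ≤ jbR x := Real.one_le_sqrt.2 (by nlinarith)

lemma abs_le_jbR (x : ℝ) : |x| ≤ jbR x := Real.abs_le_sqrt (by linarith)

lemma jbR_le_one_add_abs (x : ℝ) : jbR x ≤ 1 + |x| :=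
  Real.sqrt_le_iff.2 ⟨by positivity, by nlinarith [abs_nonneg x, sq_abs x]⟩

lemma jbR_neg (x : ℝ) : jbR (-x) = jbR x := by
  rw [jbR, neg_sq, jbR]

lemma jbR_le_jbR {x y : ℝ} (h : |x| ≤ |y|) : jbR x ≤ jbR y :=
  Real.sqrt_le_sqrt (add_le_add_right (sq_le_sq.2 h) 1)

lemma jbR_add_le_add (x y : ℝ) : jbR (x + y) ≤ jbR x + jbR y := by
  have hxy : x * y ≤ jbR x * jbR y :=
    calc x * y ≤ |x| * |y| := (le_abs_self _).trans_eq (abs_mul x y)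
      _ ≤ jbR x * jbR y :=
        mul_le_mul (abs_le_jbR x) (abs_le_jbR y) (abs_nonneg y) (jbR_pos x).le
  refine Real.sqrt_le_iff.2 ⟨(add_pos (jbR_pos x) (jbR_pos y)).le, ?_⟩
  linarith [sq_jbR x, sq_jbR y, add_sq (jbR x) (jbR y), add_sq x y]

lemma jbR_add_le_mul (x y : ℝ) : jbR (x + y) ≤ 2 * (jbR x * jbR y) := by
  nlinarith [jbR_add_le_add x y, one_le_jbR x, one_le_jbR y]

lemma jbR_le_jbR_sub_add_jbR_add (x y : ℝ) : jbR x ≤ jbR (x - y) + jbR (x + y) := by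
  have h_two_mul : (x - y) + (x + y) = 2 * x := by ring
  refine le_trans (jbR_le_jbR ?_) (jbR_add_le_add (x - y) (x + y))
  rw [h_two_mul, abs_mul, abs_two]
  linarith [abs_nonneg x]

lemma jbR_add_jbR_le (x y : ℝ) : jbR x + jbR y ≤ 2 * (jbR (x - y) + jbR (x + y)) := by
  have hy := jbR_le_jbR_sub_add_jbR_add y x
  rw [← neg_sub x y, jbR_neg, add_comm y x] at hy
  linarith [jbR_le_jbR_sub_add_jbR_add x y]

lemma sq_jbR_add_jbR_le (x y : ℝ) :
    (jbR x + jbR y) ^ 2 ≤ (3 * jbR (x + y)) ^ 2 * (jbR x * jbR y) := by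
  have hx : jbR x ≤ 2 * (jbR (x + y) * jbR y) := by
    simpa only [add_neg_cancel_right, jbR_neg] using jbR_add_le_mul (x + y) (-y)
  have hy : jbR y ≤ 2 * (jbR (x + y) * jbR x) := by
    simpa only [add_neg_cancel_comm, jbR_neg] using jbR_add_le_mul (x + y) (-x)
  have hs := one_le_jbR (x + y)
  have hxy := mul_pos (jbR_pos x) (jbR_pos y)
  calc (jbR x + jbR y) ^ 2 = jbR x * jbR x + jbR y * jbR y + 2 * (jbR x * jbR y) := by ring
    _ ≤ jbR x * (2 * (jbR (x + y) * jbR y)) + jbR y * (2 * (jbR (x + y) * jbR x))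
          + 2 * (jbR x * jbR y) := by
        gcongr
        · exact (jbR_pos x).le
        · exact (jbR_pos y).le
    _ = (4 * jbR (x + y) + 2) * (jbR x * jbR y) := by ring
    _ ≤ (3 * jbR (x + y)) ^ 2 * (jbR x * jbR y) := by
        gcongr
        nlinarith

end JapaneseBracket

section Weight

/-- The multiplier of the Zakharov trilinear form at the frequencies `(n₁, n₂) = (m, n)`. -/
noncomputable def zakharovWeight (σ : ℝ) (m n : ℤ) : ℝ :=
  jbR ((m - n : ℤ) : ℝ) ^ (-(1 : ℝ)) * (|m - n| : ℝ) * (jbR (m : ℝ) + jbR (n : ℝ)) /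
    (jbR (PhiZak σ m n) ^ (1/2 : ℝ) * jbR (m : ℝ) ^ (1/2 : ℝ) * jbR (n : ℝ) ^ (1/2 : ℝ))

/-- The sequence `n ↦ ⟨n⟩⁻¹`, valued in `ℝ≥0` so that its norm is an instance of `l2Z`. -/
noncomputable def jbInv (n : ℤ) : ℝ≥0 := NNReal.mk (jbR n)⁻¹ (inv_pos.2 (jbR_pos n)).le

lemma coe_jbInv (n : ℤ) : (jbInv n : ℝ) = (jbR n)⁻¹ := rfl

/-- The majorant `⟨m⟩⁻¹ + ⟨n⟩⁻¹ + ⟨m - n⟩⁻¹ + ⟨m + n⟩⁻¹` of the Zakharov weight, up to a constant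
depending on `σ`. -/
noncomputable def jbInvSum (m n : ℤ) : ℝ≥0 :=
  jbInv m + jbInv n + jbInv (m - n) + jbInv (m + n)

lemma coe_jbInvSum (m n : ℤ) :
    (jbInvSum m n : ℝ) = (jbR m)⁻¹ + (jbR n)⁻¹ + (jbR (m - n))⁻¹ + (jbR (m + n))⁻¹ := by
  simp only [jbInvSum, NNReal.coe_add, coe_jbInv, Int.cast_sub, Int.cast_add]

lemma inv_jbR_add_le_jbInvSum (m n : ℤ) : (jbR (m + n))⁻¹ ≤ jbInvSum m n := by
  have hm := inv_pos.2 (jbR_pos m)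
  have hn := inv_pos.2 (jbR_pos n)
  have hd := inv_pos.2 (jbR_pos (m - n))
  rw [coe_jbInvSum]
  linarith

lemma PhiZak_eq_mul_add (σ : ℝ) (m n : ℤ) :
    PhiZak σ m n = ((m : ℝ) - n) * (m + n) + σ * jbR (m - n) := by
  rw [PhiZak]
  push_cast
  ring

lemma jbR_sub_mul_jbR_add_le (σ : ℝ) {m n : ℤ} (hmn : m ≠ n) :
    jbR (m - n) * jbR (m + n) ≤
      2 * jbR (PhiZak σ m n) + (1 + 2 * |σ|) * jbR (m - n) := by
  have hd : (1 : ℝ) ≤ |(m : ℝ) - n| := mod_cast Int.one_le_abs (sub_ne_zero.2 hmn)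
  have hd_two : jbR (m - n) ≤ 2 * |(m : ℝ) - n| := by
    linarith [jbR_le_one_add_abs ((m : ℝ) - n)]
  have hprod : |(m : ℝ) - n| * |(m : ℝ) + n| ≤ jbR (PhiZak σ m n) + |σ| * jbR (m - n) :=
    calc |(m : ℝ) - n| * |(m : ℝ) + n| = |PhiZak σ m n - σ * jbR (m - n)| := by
          rw [PhiZak_eq_mul_add, add_sub_cancel_right, abs_mul]
      _ ≤ |PhiZak σ m n| + |σ * jbR (m - n)| := abs_sub _ _
      _ ≤ jbR (PhiZak σ m n) + |σ| * jbR (m - n) := by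
          rw [abs_mul, abs_of_pos (jbR_pos _)]
          gcongr
          exact abs_le_jbR _
  calc jbR (m - n) * jbR (m + n) ≤ jbR (m - n) * (1 + |(m : ℝ) + n|) := by
        gcongr
        · exact (jbR_pos _).le
        · exact jbR_le_one_add_abs _
    _ = jbR (m - n) + jbR (m - n) * |(m : ℝ) + n| := by ring
    _ ≤ jbR (m - n) + 2 * |(m : ℝ) - n| * |(m : ℝ) + n| := by gcongr
    _ ≤ 2 * jbR (PhiZak σ m n) + (1 + 2 * |σ|) * jbR (m - n) := by linarith

lemma jbR_sub_mul_jbR_add_le_or (σ : ℝ) {m n : ℤ} (hmn : m ≠ n) :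
    jbR (m - n) * jbR (m + n) ≤ 4 * jbR (PhiZak σ m n) ∨ jbR (m + n) ≤ 4 * (1 + |σ|) := by
  refine or_iff_not_imp_right.2 fun hs => ?_
  have hd := mul_le_mul_of_nonneg_left (not_le.1 hs).le (jbR_pos (m - n)).le
  linarith [jbR_sub_mul_jbR_add_le σ hmn, jbR_pos ((m : ℝ) - n)]

lemma zakharovWeight_self (σ : ℝ) (n : ℤ) : zakharovWeight σ n n = 0 := by
  simp only [zakharovWeight, sub_self, abs_zero, mul_zero, zero_mul, zero_div]

lemma zakharovWeight_le_of_sq_le {σ c : ℝ} {m n : ℤ} (hc : 0 ≤ c)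
    (h : (jbR m + jbR n) ^ 2 ≤ c ^ 2 * (jbR (PhiZak σ m n) * jbR m * jbR n)) :
    zakharovWeight σ m n ≤ c := by
  have hΦ := jbR_pos (PhiZak σ m n)
  have hm := jbR_pos m
  have hn := jbR_pos n
  have hd : jbR ((m - n : ℤ) : ℝ) ^ (-(1 : ℝ)) * (|m - n| : ℝ) ≤ 1 := by
    rw [Real.rpow_neg_one, inv_mul_le_one₀ (jbR_pos _), Int.cast_sub]
    exact abs_le_jbR _
  rw [zakharovWeight, ← Real.mul_rpow hΦ.le hm.le, ← Real.mul_rpow (by positivity) hn.le,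
    ← Real.sqrt_eq_rpow, div_le_iff₀ (by positivity)]
  calc _ ≤ 1 * (jbR m + jbR n) := by gcongr
    _ = jbR m + jbR n := one_mul _
    _ ≤ √(c ^ 2 * (jbR (PhiZak σ m n) * jbR m * jbR n)) := Real.le_sqrt_of_sq_le h
    _ = c * √(jbR (PhiZak σ m n) * jbR m * jbR n) := by
        rw [Real.sqrt_mul (sq_nonneg c), Real.sqrt_sq hc]

lemma zakharovWeight_le_of_nonresonant {σ : ℝ} {m n : ℤ}
    (h : jbR (m - n) * jbR (m + n) ≤ 4 * jbR (PhiZak σ m n)) :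
    zakharovWeight σ m n ≤ 2 * jbInvSum m n := by
  refine zakharovWeight_le_of_sq_le (by positivity) ?_
  rw [coe_jbInvSum]
  have hsum := jbR_add_jbR_le m n
  have hΦ := jbR_pos (PhiZak σ m n)
  have hA := jbR_pos m
  have hB := jbR_pos n
  have hD := jbR_pos (m - n)
  have hS := jbR_pos (m + n)
  set A := jbR m
  set B := jbR n
  set D := jbR (m - n)
  set S := jbR (m + n)
  calc (A + B) ^ 2 = (A + B) * (A + B) := sq _
    _ ≤ (A + B) * (2 * (D + S)) := by gcongr
    _ = 2 * ((A⁻¹ + B⁻¹) * (D⁻¹ + S⁻¹)) * (D * S * (A * B)) := by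
        field_simp
        ring
    _ ≤ 2 * ((A⁻¹ + B⁻¹) * (D⁻¹ + S⁻¹)) * (4 * jbR (PhiZak σ m n) * (A * B)) := by gcongr
    _ = 2 * (4 * (A⁻¹ + B⁻¹) * (D⁻¹ + S⁻¹)) * (jbR (PhiZak σ m n) * A * B) := by ring
    _ ≤ 2 * (A⁻¹ + B⁻¹ + (D⁻¹ + S⁻¹)) ^ 2 * (jbR (PhiZak σ m n) * A * B) := by
        gcongr
        exact four_mul_le_sq_add _ _
    _ ≤ 4 * (A⁻¹ + B⁻¹ + (D⁻¹ + S⁻¹)) ^ 2 * (jbR (PhiZak σ m n) * A * B) := by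
        gcongr
        norm_num
    _ = (2 * (A⁻¹ + B⁻¹ + D⁻¹ + S⁻¹)) ^ 2 * (jbR (PhiZak σ m n) * A * B) := by ring

lemma zakharovWeight_le_jbR_add (σ : ℝ) (m n : ℤ) :
    zakharovWeight σ m n ≤ 3 * jbR (m + n) := by
  have hm := jbR_pos m
  have hn := jbR_pos n
  refine zakharovWeight_le_of_sq_le (mul_pos three_pos (jbR_pos _)).le ?_
  calc (jbR m + jbR n) ^ 2 ≤ (3 * jbR (m + n)) ^ 2 * (jbR m * jbR n) := sq_jbR_add_jbR_le _ _
    _ = (3 * jbR (m + n)) ^ 2 * (1 * jbR m * jbR n) := by rw [one_mul]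
    _ ≤ (3 * jbR (m + n)) ^ 2 * (jbR (PhiZak σ m n) * jbR m * jbR n) := by
        gcongr
        exact one_le_jbR _

lemma zakharovWeight_le_of_jbR_add_le {R : ℝ} (σ : ℝ) {m n : ℤ} (h : jbR (m + n) ≤ R) :
    zakharovWeight σ m n ≤ 3 * R ^ 2 * jbInvSum m n := by
  have hS := jbR_pos (m + n)
  calc zakharovWeight σ m n ≤ 3 * jbR (m + n) := zakharovWeight_le_jbR_add σ m n
    _ = 3 * jbR (m + n) ^ 2 * (jbR (m + n))⁻¹ := by field_simp
    _ ≤ 3 * R ^ 2 * jbInvSum m n := by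
        gcongr
        exact inv_jbR_add_le_jbInvSum m n

theorem zakharovWeight_le (σ : ℝ) (m n : ℤ) :
    zakharovWeight σ m n ≤ 48 * (1 + |σ|) ^ 2 * jbInvSum m n := by
  obtain rfl | hmn := eq_or_ne m n
  · rw [zakharovWeight_self]
    positivity
  obtain h | h := jbR_sub_mul_jbR_add_le_or σ hmn
  · refine (zakharovWeight_le_of_nonresonant h).trans ?_
    gcongr
    nlinarith [abs_nonneg σ]
  · exact (zakharovWeight_le_of_jbR_add_le σ h).trans_eq (by ring)

end Weight

section SquareSummable

lemma summable_sq_jbInv : Summable fun n : ℤ => jbInv n ^ 2 := by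
  rw [← NNReal.summable_coe]
  refine (Real.summable_one_div_int_pow.2 one_lt_two).of_norm_bounded_eventually ?_
  filter_upwards [(Set.finite_singleton (0 : ℤ)).compl_mem_cofinite] with n hn
  have hn_pos : (0 : ℝ) < (n : ℝ) ^ 2 := by
    have : n ≠ 0 := hn
    positivity
  rw [NNReal.norm_eq, NNReal.coe_pow, coe_jbInv, inv_pow, sq_jbR, one_div]
  gcongr
  linarith

lemma l2Z_lt_top {ω : ℤ → ℝ≥0} (hω : Summable fun n => ω n ^ 2) : l2Z ω < ⊤ := by
  refine ENNReal.rpow_lt_top_of_nonneg (by norm_num) ?_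
  simpa only [ENNReal.coe_pow] using ENNReal.tsum_coe_ne_top_iff_summable.2 hω

end SquareSummable

section CauchySchwarz

variable {ι α β γ δ : Type*}

lemma tsum_mul_le_Lp_mul_Lq {p q : ℝ} (hpq : p.HolderConjugate q) (u v : ι → ℝ≥0∞) :
    ∑' i, u i * v i ≤ (∑' i, u i ^ p) ^ (1 / p) * (∑' i, v i ^ q) ^ (1 / q) := by
  let _ : MeasurableSpace ι := ⊤
  simpa only [MeasureTheory.lintegral_count, Pi.mul_apply] using
    ENNReal.lintegral_mul_le_Lp_mul_Lq (MeasureTheory.Measure.count (α := ι)) hpq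
      (f := u) (g := v) measurable_from_top.aemeasurable measurable_from_top.aemeasurable

lemma rpow_half_tsum_mul_sq_comp_le (a : α → ℝ≥0∞) (b : β → ℝ≥0∞) {x : ι → α} {y : ι → β}
    (hxy : Function.Injective fun i => (x i, y i)) :
    (∑' i, (a (x i) * b (y i)) ^ 2) ^ (1/2 : ℝ) ≤
      (∑' s, a s ^ 2) ^ (1/2 : ℝ) * (∑' t, b t ^ 2) ^ (1/2 : ℝ) := by
  rw [← ENNReal.mul_rpow_of_nonneg _ _ one_half_pos.le]
  refine ENNReal.rpow_le_rpow ?_ one_half_pos.le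
  calc ∑' i, (a (x i) * b (y i)) ^ 2 ≤ ∑' z : α × β, (a z.1 * b z.2) ^ 2 :=
        ENNReal.tsum_comp_le_tsum_of_injective hxy fun z => (a z.1 * b z.2) ^ 2
    _ = (∑' s, a s ^ 2) * ∑' t, b t ^ 2 := by
        simp only [ENNReal.tsum_prod', mul_pow, ENNReal.tsum_mul_left, ENNReal.tsum_mul_right]

lemma tsum_mul_mul_mul_comp_le (a : α → ℝ≥0∞) (b : β → ℝ≥0∞) (c : γ → ℝ≥0∞) (d : δ → ℝ≥0∞)
    {x : ι → α} {y : ι → β} {z : ι → γ} {t : ι → δ}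
    (hxy : Function.Injective fun i => (x i, y i))
    (hzt : Function.Injective fun i => (z i, t i)) :
    ∑' i, a (x i) * b (y i) * (c (z i) * d (t i)) ≤
      (∑' j, a j ^ 2) ^ (1/2 : ℝ) * (∑' j, b j ^ 2) ^ (1/2 : ℝ) *
        ((∑' j, c j ^ 2) ^ (1/2 : ℝ) * (∑' j, d j ^ 2) ^ (1/2 : ℝ)) := by
  have hCS := tsum_mul_le_Lp_mul_Lq .two_two
    (fun i => a (x i) * b (y i)) (fun i => c (z i) * d (t i))
  simp only [ENNReal.rpow_two] at hCS
  exact hCS.trans (mul_le_mul' (rpow_half_tsum_mul_sq_comp_le a b hxy)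
    (rpow_half_tsum_mul_sq_comp_le c d hzt))

end CauchySchwarz

section TrilinearForm

lemma tsum_mul_mul_mul_le_l2Z {ι : Type*} (a b c d : ℤ → ℝ≥0) {x y z t : ι → ℤ}
    (hxy : Function.Injective fun p => (x p, y p))
    (hzt : Function.Injective fun p => (z p, t p)) :
    ∑' p, (a (x p) * b (y p) * (c (z p) * d (t p)) : ℝ≥0∞) ≤
      l2Z a * l2Z b * (l2Z c * l2Z d) :=
  tsum_mul_mul_mul_comp_le (fun n => (a n : ℝ≥0∞)) (fun n => (b n : ℝ≥0∞))
    (fun n => (c n : ℝ≥0∞)) (fun n => (d n : ℝ≥0∞)) hxy hzt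

lemma tsum_jbInvSum_mul_le (f g h : ℤ → ℝ≥0) :
    ∑' p : ℤ × ℤ, (jbInvSum p.1 p.2 * f (p.1 - p.2) * g p.1 * h p.2 : ℝ≥0∞) ≤
      4 * l2Z jbInv * (l2Z f * l2Z g * l2Z h) := by
  have h_fst := tsum_mul_mul_mul_le_l2Z (ι := ℤ × ℤ) jbInv f g h
    (x := fun p => p.1) (y := fun p => p.1 - p.2) (z := fun p => p.1) (t := fun p => p.2)
    (fun p q => by grind) (fun p q => by grind)
  have h_snd := tsum_mul_mul_mul_le_l2Z (ι := ℤ × ℤ) jbInv f g h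
    (x := fun p => p.2) (y := fun p => p.1 - p.2) (z := fun p => p.1) (t := fun p => p.2)
    (fun p q => by grind) (fun p q => by grind)
  -- `⟨n₁ - n₂⟩⁻¹` and `f` share their index, so here they go to different factors.
  have h_sub := tsum_mul_mul_mul_le_l2Z (ι := ℤ × ℤ) jbInv g f h
    (x := fun p => p.1 - p.2) (y := fun p => p.1) (z := fun p => p.1 - p.2) (t := fun p => p.2)
    (fun p q => by grind) (fun p q => by grind)
  have h_add := tsum_mul_mul_mul_le_l2Z (ι := ℤ × ℤ) jbInv f g h
    (x := fun p => p.1 + p.2) (y := fun p => p.1 - p.2) (z := fun p => p.1) (t := fun p => p.2)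
    (fun p q => by grind) (fun p q => by grind)
  calc ∑' p : ℤ × ℤ, (jbInvSum p.1 p.2 * f (p.1 - p.2) * g p.1 * h p.2 : ℝ≥0∞)
      = ∑' p : ℤ × ℤ, (jbInv p.1 * f (p.1 - p.2) * (g p.1 * h p.2) +
          jbInv p.2 * f (p.1 - p.2) * (g p.1 * h p.2) +
          jbInv (p.1 - p.2) * g p.1 * (f (p.1 - p.2) * h p.2) +
          jbInv (p.1 + p.2) * f (p.1 - p.2) * (g p.1 * h p.2) : ℝ≥0∞) :=
        tsum_congr fun p => by
          simp only [jbInvSum, ENNReal.coe_add]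
          ring
    _ ≤ l2Z jbInv * l2Z f * (l2Z g * l2Z h) + l2Z jbInv * l2Z f * (l2Z g * l2Z h) +
          l2Z jbInv * l2Z g * (l2Z f * l2Z h) + l2Z jbInv * l2Z f * (l2Z g * l2Z h) := by
        rw [ENNReal.tsum_add, ENNReal.tsum_add, ENNReal.tsum_add]
        exact add_le_add (add_le_add (add_le_add h_fst h_snd) h_sub) h_add
    _ = 4 * l2Z jbInv * (l2Z f * l2Z g * l2Z h) := by ring

theorem tsum_zakharovWeight_mul_le (σ : ℝ) (f g h : ℤ → ℝ≥0) :
    ∑' p : ℤ × ℤ, (ENNReal.ofReal (zakharovWeight σ p.1 p.2) * f (p.1 - p.2) * g p.1 * h p.2) ≤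
      ENNReal.ofReal (48 * (1 + |σ|) ^ 2) *
        (4 * l2Z jbInv * (l2Z f * l2Z g * l2Z h)) := by
  have hweight (p : ℤ × ℤ) : ENNReal.ofReal (zakharovWeight σ p.1 p.2) ≤
      ENNReal.ofReal (48 * (1 + |σ|) ^ 2) * jbInvSum p.1 p.2 := by
    rw [← ENNReal.ofReal_coe_nnreal, ← ENNReal.ofReal_mul (by positivity)]
    exact ENNReal.ofReal_le_ofReal (zakharovWeight_le σ p.1 p.2)
  calc _ ≤ ∑' p : ℤ × ℤ, ENNReal.ofReal (48 * (1 + |σ|) ^ 2) *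
        (jbInvSum p.1 p.2 * f (p.1 - p.2) * g p.1 * h p.2) :=
        ENNReal.tsum_le_tsum fun p => by
          simp only [← mul_assoc]
          gcongr
          exact hweight p
    _ ≤ _ := by
        rw [ENNReal.tsum_mul_left]
        gcongr
        exact tsum_jbInvSum_mul_le f g h

end TrilinearForm

theorem Zakharov_W4_general :
    ∃ C : ℝ, 0 < C ∧
      ∀ (σ : ℝ) (f g h : ℤ → ℝ≥0),
        ∑' p : ℤ × ℤ,
            (ENNReal.ofReal (zakharovWeight σ p.1 p.2) * f (p.1 - p.2) * g p.1 * h p.2)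
          ≤ ENNReal.ofReal (C * (1 + |σ|) ^ 2) * (l2Z f * l2Z g * l2Z h) := by
  obtain ⟨r, hr, -⟩ := ENNReal.lt_iff_exists_nnreal_btwn.1 (l2Z_lt_top summable_sq_jbInv)
  have hr_pos : (0 : ℝ) < r := NNReal.coe_pos.2 (ENNReal.coe_pos.1 (pos_of_gt hr))
  refine ⟨192 * r, by positivity, fun σ f g h => (tsum_zakharovWeight_mul_le σ f g h).trans ?_⟩
  have hC : ENNReal.ofReal (192 * r * (1 + |σ|) ^ 2) =
      ENNReal.ofReal (48 * (1 + |σ|) ^ 2) * (4 * r) := by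
    rw [show 192 * r * (1 + |σ|) ^ 2 = 48 * (1 + |σ|) ^ 2 * (4 * r) by ring,
      ENNReal.ofReal_mul (by positivity), ENNReal.ofReal_mul zero_le_four, ENNReal.ofReal_ofNat,
      ENNReal.ofReal_coe_nnreal]
  rw [hC, mul_assoc (ENNReal.ofReal _)]
  gcongr

/-- The Zakharov trilinear weight estimate with weight
`⟨n₀⟩^{-1} |n₀| (⟨n₁⟩ + ⟨n₂⟩) / (⟨Φ_σ⟩^{1/2} ⟨n₁⟩^{1/2} ⟨n₂⟩^{1/2})`, `n₀ = n₁ - n₂`. -/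
theorem Zakharov_W4 :
    ∃ C : ℝ, 0 < C ∧
      ∀ σ : ℝ, (σ = 1 ∨ σ = -1) →
        ∀ f g h : ℤ → ℝ≥0,
          Summable (fun n => f n ^ 2) → Summable (fun n => g n ^ 2) →
          Summable (fun n => h n ^ 2) →
          (∑' p : ℤ × ℤ,
              ENNReal.ofReal (jbR ((p.1 - p.2 : ℤ) : ℝ) ^ (-(1 : ℝ)) * (|p.1 - p.2| : ℝ) *
                  (jbR (p.1 : ℝ) + jbR (p.2 : ℝ)) /
                  (jbR (PhiZak σ p.1 p.2) ^ (1/2 : ℝ) * jbR (p.1 : ℝ) ^ (1/2 : ℝ) *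
                    jbR (p.2 : ℝ) ^ (1/2 : ℝ))) *
                (f (p.1 - p.2) : ℝ≥0∞) * (g p.1 : ℝ≥0∞) * (h p.2 : ℝ≥0∞))
            ≤ ENNReal.ofReal C * (l2Z f * l2Z g * l2Z h) := by
  obtain ⟨C, hC, hbound⟩ := Zakharov_W4_general
  exact ⟨C * (1 + 1) ^ 2, by positivity, fun σ hσ f g h _ _ _ =>
    (abs_eq zero_le_one).2 hσ ▸ hbound σ f g h⟩
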